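/- arXiv:2307.05053 — 8 statements merged into one kernel-verified Lean document; each statement's English description precedes it below -/
import Mathlib

section
/- (Simulated Necessitation) Let T be a closed theory that includes both the schema V and the schema K. Then for every formula φ, if T entails φ, then T entails Kφ. -/
/-!
Entailment is classical propositional entailment over the basic formulas, hence compact:
if `T ⊨ φ`, then already some finite `{ψ₁, …, ψₙ} ⊆ T` entails `φ`
(`exists_finset_entails`, proved with an ultraproduct of models). Then
`ψ₁ → … → ψₙ → φ` is valid, so `K (ψ₁ → … → ψₙ → φ)` is in `T` by schema V; distributing
`K` with schema K and using `K ψᵢ ∈ T` by closedness gives `T ⊨ K φ`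
(`entails_K_of_finset`).
-/

/-- Formulas of propositional modal logic over atoms `A`. -/
inductive Formula (A : Type) : Type
  | atom : A → Formula A
  | neg : Formula A → Formula A
  | and : Formula A → Formula A → Formula A
  | or : Formula A → Formula A → Formula A
  | imp : Formula A → Formula A → Formula A
  | K : Formula A → Formula A

/-- A model assigns a truth value to each basic formula, i.e. to each
atom and to each formula of the form `K φ`. -/
structure Model (A : Type) where
  atomVal : A → Prop
  kVal : Formula A → Prop

/-- Truth of a formula in a model. -/
def Model.Sat {A : Type} (M : Model A) : Formula A → Prop
  | .atom a => M.atomVal a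
  | .neg φ => ¬ M.Sat φ
  | .and φ ψ => M.Sat φ ∧ M.Sat ψ
  | .or φ ψ => M.Sat φ ∨ M.Sat ψ
  | .imp φ ψ => M.Sat φ → M.Sat ψ
  | .K φ => M.kVal φ

/-- A model satisfies a theory if it satisfies each of its members. -/
def Model.SatTheory {A : Type} (M : Model A) (T : Set (Formula A)) : Prop :=
  ∀ φ ∈ T, M.Sat φ

/-- `T` entails `φ`: every model of `T` satisfies `φ`. -/
def Entails {A : Type} (T : Set (Formula A)) (φ : Formula A) : Prop :=
  ∀ M : Model A, M.SatTheory T → M.Sat φ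

/-- `φ` is valid iff it is entailed by the empty theory. -/
def Valid {A : Type} (φ : Formula A) : Prop := Entails ∅ φ

/-- A theory is closed if it contains `K φ` whenever it contains `φ`. -/
def TheoryClosed {A : Type} (T : Set (Formula A)) : Prop :=
  ∀ φ ∈ T, Formula.K φ ∈ T

/-- A theory is consistent iff some model satisfies it. -/
def Consistent {A : Type} (T : Set (Formula A)) : Prop :=
  ∃ M : Model A, M.SatTheory T

/-- The schema V: `K φ` for every valid `φ`. -/
def schemaV (A : Type) : Set (Formula A) :=
  { χ | ∃ φ, Valid φ ∧ χ = Formula.K φ }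

/-- The schema K: all formulas `K(φ→ψ) → (Kφ → Kψ)`. -/
def schemaK (A : Type) : Set (Formula A) :=
  { χ | ∃ φ ψ, χ = Formula.imp (Formula.K (Formula.imp φ ψ))
      (Formula.imp (Formula.K φ) (Formula.K ψ)) }

/-- The schema T: all formulas `Kφ → φ`. -/
def schemaT (A : Type) : Set (Formula A) :=
  { χ | ∃ φ, χ = Formula.imp (Formula.K φ) φ }

/-- The schema KK (a.k.a. 4): all formulas `Kφ → KKφ`. -/
def schemaKK (A : Type) : Set (Formula A) :=
  { χ | ∃ φ, χ = Formula.imp (Formula.K φ) (Formula.K (Formula.K φ)) }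

/-- `φ ↔ ψ` abbreviates `(φ→ψ) ∧ (ψ→φ)`. -/
def Formula.iffF {A : Type} (φ ψ : Formula A) : Formula A :=
  Formula.and (Formula.imp φ ψ) (Formula.imp ψ φ)

/-- The model `M_{T,S}`: atoms are true iff in `S`; `Kφ` true iff `T ⊨ φ`. -/
def canonModel {A : Type} (T : Set (Formula A)) (S : Set A) : Model A :=
  { atomVal := fun a => a ∈ S, kVal := fun φ => Entails T φ }

/-- `T` is generic iff for every set `S` of atoms and every theory `T' ⊇ T`,
`M_{T',S} ⊨ T`. -/
def Generic {A : Type} (T : Set (Formula A)) : Prop :=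
  ∀ (S : Set A) (T' : Set (Formula A)), T ⊆ T' → (canonModel T' S).SatTheory T

/-- `T` is closed generic iff for every set `S` of atoms and every closed
theory `T' ⊇ T`, `M_{T',S} ⊨ T`. -/
def ClosedGeneric {A : Type} (T : Set (Formula A)) : Prop :=
  ∀ (S : Set A) (T' : Set (Formula A)), TheoryClosed T' → T ⊆ T' →
    (canonModel T' S).SatTheory T

/-- The smallest closed theory containing `X`: the intersection of all
closed theories containing `X`. -/
def closedClosure {A : Type} (X : Set (Formula A)) : Set (Formula A) :=
  ⋂₀ { T | TheoryClosed T ∧ X ⊆ T }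

/-- The limit of a family of models along an ultrafilter: a basic formula is true
iff it is true in `U`-almost all members of the family. -/
def ultraModel {A ι : Type} (U : Ultrafilter ι) (M : ι → Model A) : Model A where
  atomVal a := ∀ᶠ i in U, (M i).atomVal a
  kVal φ := ∀ᶠ i in U, (M i).kVal φ

/-- Łoś's theorem for `ultraModel`. -/
theorem ultraModel_sat {A ι : Type} (U : Ultrafilter ι) (M : ι → Model A) (φ : Formula A) :
    (ultraModel U M).Sat φ ↔ ∀ᶠ i in U, (M i).Sat φ := by
  induction φ with
  | atom a => exact Iff.rfl
  | neg φ ih => simp only [Model.Sat, ih, Ultrafilter.eventually_not]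
  | and φ ψ ih₁ ih₂ => simp only [Model.Sat, ih₁, ih₂, Filter.eventually_and]
  | or φ ψ ih₁ ih₂ => simp only [Model.Sat, ih₁, ih₂, Ultrafilter.eventually_or]
  | imp φ ψ ih₁ ih₂ => simp only [Model.Sat, ih₁, ih₂, Ultrafilter.eventually_imp]
  | K φ _ => exact Iff.rfl

/-- Compactness of entailment. The finite part of `T` is written `↑s ∩ T`, so that `s`
ranges over all finite sets of formulas. -/
theorem exists_finset_entails {A : Type} {T : Set (Formula A)} {φ : Formula A}
    (h : Entails T φ) : ∃ s : Finset (Formula A), Entails (↑s ∩ T) φ := by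
  classical
  by_contra! hcon
  have hex : ∀ s : Finset (Formula A), ∃ M : Model A, M.SatTheory (↑s ∩ T) ∧ ¬ M.Sat φ := by
    intro s
    simpa [Entails] using hcon s
  choose M hM hφ using hex
  let U : Ultrafilter (Finset (Formula A)) := Ultrafilter.of Filter.atTop
  have hT : (ultraModel U M).SatTheory T := by
    intro ψ hψ
    rw [ultraModel_sat]
    -- `M s` satisfies `ψ` as soon as `s` contains `ψ`.
    refine Ultrafilter.of_le _ ?_
    filter_upwards [Filter.eventually_ge_atTop ({ψ} : Finset (Formula A))] with s hs
    exact hM s ψ ⟨hs (Finset.mem_singleton_self ψ), hψ⟩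
  obtain ⟨s, hs⟩ := ((ultraModel_sat U M φ).1 (h _ hT)).exists
  exact hφ s hs

/-- Necessitation for consequences of a finite part of `T`: schema V handles the empty
part, and one premise at a time is discharged with the deduction theorem, schema K and
closedness. -/
theorem entails_K_of_finset {A : Type} {T : Set (Formula A)} (hclosed : TheoryClosed T)
    (hV : schemaV A ⊆ T) (hK : schemaK A ⊆ T) (s : Finset (Formula A)) :
    ∀ φ, Entails (↑s ∩ T) φ → Entails T (Formula.K φ) := by
  classical
  induction s using Finset.induction_on with
  | empty =>
    intro φ h M hM
    have hval : Valid φ := by simpa [Valid] using h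
    exact hM _ (hV ⟨φ, hval, rfl⟩)
  | insert ψ s _ ih =>
    intro φ h
    by_cases hψ : ψ ∈ T
    · have himp : Entails (↑s ∩ T) (Formula.imp ψ φ) := by
        intro M hM hMψ
        refine h M ?_
        rintro χ ⟨hχ, hχT⟩
        rcases Finset.mem_insert.1 hχ with rfl | hχ
        · exact hMψ
        · exact hM χ ⟨hχ, hχT⟩
      intro M hM
      exact hM _ (hK ⟨ψ, φ, rfl⟩) (ih _ himp M hM) (hM _ (hclosed ψ hψ))
    · refine ih φ fun M hM => h M ?_
      rintro χ ⟨hχ, hχT⟩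
      rcases Finset.mem_insert.1 hχ with rfl | hχ
      · exact absurd hχT hψ
      · exact hM χ ⟨hχ, hχT⟩

/-- Simulated Necessitation: if `T` is closed and includes
the schemas V and K, then `T ⊨ φ` implies `T ⊨ Kφ`. -/
theorem statement1 (A : Type) [Nonempty A] (T : Set (Formula A))
    (hclosed : TheoryClosed T) (hV : schemaV A ⊆ T) (hK : schemaK A ⊆ T)
    (φ : Formula A) (h : Entails T φ) : Entails T (Formula.K φ) := by
  obtain ⟨s, hs⟩ := exists_finset_entails h
  exact entails_K_of_finset hclosed hV hK s φ hs
end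

section
/- (The Knower Paradox) Let p be a propositional atom, and let T_KP be the smallest closed theory containing the schema V, the schema K, the schema T, and the formula p ↔ K¬p. Then T_KP is inconsistent. -/
/-- The Knower Paradox: the smallest closed theory containing
V, K, T, and `p ↔ K¬p` is inconsistent. -/
theorem statement2 (A : Type) [Nonempty A] (p : A) :
    ¬ Consistent (closedClosure
      (schemaV A ∪ schemaK A ∪ schemaT A ∪
        {Formula.iffF (Formula.atom p) (Formula.K (Formula.neg (Formula.atom p)))})) := by
  rintro ⟨M, hM⟩
  -- Members of the generating set, and those formulas prefixed by `K`, hold in `M`.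
  have ax : ∀ φ ∈ schemaV A ∪ schemaK A ∪ schemaT A ∪
      {Formula.iffF (Formula.atom p) (Formula.K (Formula.neg (Formula.atom p)))},
      M.Sat φ ∧ M.kVal φ := fun φ hφ =>
    ⟨hM φ fun _ hT => hT.2 hφ, hM (.K φ) fun _ hT => hT.1 φ (hT.2 hφ)⟩
  have mp : ∀ φ ψ, M.kVal (.imp φ ψ) → M.kVal φ → M.kVal ψ := fun φ ψ =>
    (ax _ (.inl (.inl (.inr ⟨φ, ψ, rfl⟩)))).1
  obtain ⟨ht, hKt⟩ := ax (.imp (.K (.neg (.atom p))) (.neg (.atom p)))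
    (.inl (.inr ⟨_, rfl⟩))
  obtain ⟨he, hKe⟩ := ax _ (.inr rfl)
  have hvalid : Valid (Formula.imp (.imp (.K (.neg (.atom p))) (.neg (.atom p)))
      (.imp (Formula.iffF (.atom p) (.K (.neg (.atom p)))) (.neg (.atom p)))) :=
    fun _ _ t e hp => t (e.1 hp) hp
  have hKv := (ax _ (.inl (.inl (.inl ⟨_, hvalid, rfl⟩)))).1
  have hK : M.kVal (.neg (.atom p)) := mp _ _ (mp _ _ hKv hKt) hKe
  exact ht hK (he.2 hK)
end

section
/- Let T₀ be a theory and let T be the smallest closed theory including T₀. If T₀ is generic, then T is generic; and if T₀ is closed generic, then T is closed generic. -/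
theorem subset_closedClosure {A : Type} (X : Set (Formula A)) : X ⊆ closedClosure X :=
  fun _ hφ _ hT => hT.2 hφ

theorem closedClosure_closed {A : Type} (X : Set (Formula A)) :
    TheoryClosed (closedClosure X) :=
  fun φ hφ T hT => hT.1 φ (hφ T hT)

/-- If `T'` includes the closure of `T₀`, then `M_{T',S}` satisfies that closure as soon as it
satisfies `T₀`: the members of the closure true in `M_{T',S}` form a closed theory, because
`K φ` holds in `M_{T',S}` for every `φ ∈ T'`. -/
theorem canonModel_satTheory_closedClosure {A : Type} {T₀ T' : Set (Formula A)} {S : Set A}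
    (hT' : closedClosure T₀ ⊆ T') (h : (canonModel T' S).SatTheory T₀) :
    (canonModel T' S).SatTheory (closedClosure T₀) := by
  intro φ hφ
  have key : φ ∈ {ψ | ψ ∈ closedClosure T₀ ∧ (canonModel T' S).Sat ψ} := by
    refine hφ _ ⟨?_, fun ψ hψ => ⟨subset_closedClosure T₀ hψ, h ψ hψ⟩⟩
    rintro ψ ⟨hψ, -⟩
    exact ⟨closedClosure_closed T₀ ψ hψ, fun M hM => hM ψ (hT' hψ)⟩
  exact key.2

/-- if `T₀` is generic (resp. closed generic), then the
smallest closed theory including `T₀` is generic (resp. closed generic). -/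
theorem statement10 (A : Type) [Nonempty A] (T₀ : Set (Formula A)) :
    (Generic T₀ → Generic (closedClosure T₀)) ∧
    (ClosedGeneric T₀ → ClosedGeneric (closedClosure T₀)) := by
  exact ⟨fun h S T' hT' => canonModel_satTheory_closedClosure hT'
      (h S T' ((subset_closedClosure T₀).trans hT')),
    fun h S T' hc hT' => canonModel_satTheory_closedClosure hT'
      (h S T' hc ((subset_closedClosure T₀).trans hT'))⟩
end

section
/- Let T₀ be a theory and let T be the normal Kripke closure of T₀, i.e., the smallest closed theory containing T₀, V, and the schema K, and such that T contains φ whenever T ⊨ φ. If T₀ is generic, then T is generic; and if T₀ is closed generic, then T is closed generic. -/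
/-- The normal Kripke closure of `T₀`: the smallest theory `T` containing
`T₀ ∪ V ∪ K`, closed, and containing `φ` whenever `T ⊨ φ`. -/
def normalKripkeClosure {A : Type} (T₀ : Set (Formula A)) : Set (Formula A) :=
  ⋂₀ { T | T₀ ∪ schemaV A ∪ schemaK A ⊆ T ∧ TheoryClosed T ∧
      ∀ φ, Entails T φ → φ ∈ T }

theorem subset_normalKripkeClosure {A : Type} (T₀ : Set (Formula A)) :
    T₀ ∪ schemaV A ∪ schemaK A ⊆ normalKripkeClosure T₀ :=
  Set.subset_sInter fun _ hU => hU.1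

theorem theoryClosed_normalKripkeClosure {A : Type} (T₀ : Set (Formula A)) :
    TheoryClosed (normalKripkeClosure T₀) :=
  fun φ hφ U hU => hU.2.1 φ (hφ U hU)

theorem mem_normalKripkeClosure_of_entails {A : Type} {T₀ : Set (Formula A)} {φ : Formula A}
    (h : Entails (normalKripkeClosure T₀) φ) : φ ∈ normalKripkeClosure T₀ :=
  fun U hU => hU.2.2 φ fun M hM => h M fun ψ hψ => hM ψ (hψ U hU)

/-- For `T'` containing the normal Kripke closure of `T₀`, the model `M_{T',S}` satisfies that
closure as soon as it satisfies `T₀`. -/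
theorem canonModel_satTheory_normalKripkeClosure {A : Type} {T₀ T' : Set (Formula A)} {S : Set A}
    (hT' : normalKripkeClosure T₀ ⊆ T') (h₀ : (canonModel T' S).SatTheory T₀) :
    (canonModel T' S).SatTheory (normalKripkeClosure T₀) := by
  intro φ hφ
  have hU : φ ∈ {ψ | ψ ∈ normalKripkeClosure T₀ ∧ (canonModel T' S).Sat ψ} := by
    refine hφ _ ⟨fun χ hχ => ⟨subset_normalKripkeClosure T₀ hχ, ?_⟩, ?_, ?_⟩
    · rcases hχ with (hχ | ⟨ψ, hψ, rfl⟩) | ⟨ψ, θ, rfl⟩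
      · exact h₀ χ hχ
      · exact fun M _ => hψ M fun _ h => h.elim
      · exact fun himp hψ M hM => himp M hM (hψ M hM)
    · exact fun ψ hψ => ⟨theoryClosed_normalKripkeClosure T₀ ψ hψ.1, fun M hM => hM ψ (hT' hψ.1)⟩
    · exact fun ψ hψ => ⟨mem_normalKripkeClosure_of_entails fun M hM => hψ M fun θ hθ => hM θ hθ.1,
        hψ _ fun θ hθ => hθ.2⟩
  exact hU.2

/-- if `T₀` is generic (resp. closed generic), then the normal
Kripke closure of `T₀` is generic (resp. closed generic). -/
theorem statement12 (A : Type) [Nonempty A] (T₀ : Set (Formula A)) :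
    (Generic T₀ → Generic (normalKripkeClosure T₀)) ∧
    (ClosedGeneric T₀ → ClosedGeneric (normalKripkeClosure T₀)) := by
  have hsub : T₀ ⊆ normalKripkeClosure T₀ := fun φ hφ =>
    subset_normalKripkeClosure T₀ (Or.inl (Or.inl hφ))
  exact ⟨fun h S T' hT' => canonModel_satTheory_normalKripkeClosure hT' (h S T' (hsub.trans hT')),
    fun h S T' hc hT' =>
      canonModel_satTheory_normalKripkeClosure hT' (h S T' hc (hsub.trans hT'))⟩
end

section
/- The theory V ∪ K ∪ KK is not generic. -/
/-- Truth at a reflexive world that sees only itself and where every atom is false. -/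
def reflTruth {A : Type} : Formula A → Prop
  | .atom _ => False
  | .neg φ => ¬ reflTruth φ
  | .and φ ψ => reflTruth φ ∧ reflTruth ψ
  | .or φ ψ => reflTruth φ ∨ reflTruth ψ
  | .imp φ ψ => reflTruth φ → reflTruth ψ
  | .K φ => reflTruth φ

/-- `reflTruth` is truth in an actual model, hence holds of every valid formula. -/
theorem sat_reflWorld {A : Type} (φ : Formula A) :
    (Model.mk (fun _ : A => False) reflTruth).Sat φ ↔ reflTruth φ := by
  induction φ with
  | atom a => exact Iff.rfl
  | neg φ ih => exact not_congr ih
  | and φ ψ ih₁ ih₂ => exact and_congr ih₁ ih₂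
  | or φ ψ ih₁ ih₂ => exact or_congr ih₁ ih₂
  | imp φ ψ ih₁ ih₂ => exact imp_congr ih₁ ih₂
  | K φ _ => exact Iff.rfl

/-- The world where every atom is true and which sees only the reflexive world described by
`reflTruth`. -/
def actualWorld (A : Type) : Model A :=
  { atomVal := fun _ => True, kVal := reflTruth }

theorem actualWorld_satTheory (A : Type) :
    (actualWorld A).SatTheory (schemaV A ∪ schemaK A ∪ schemaKK A) := by
  rintro χ ((⟨φ, hφ, rfl⟩ | ⟨φ, ψ, rfl⟩) | ⟨φ, rfl⟩)
  · exact (sat_reflWorld φ).1 (hφ _ fun _ h => h.elim)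
  · exact fun h => h
  · exact fun h => h

/-- the theory V ∪ K ∪ KK is not generic. -/
theorem statement15 (A : Type) [Nonempty A] :
    ¬ Generic (schemaV A ∪ schemaK A ∪ schemaKK A) := by
  obtain ⟨p⟩ := ‹Nonempty A›
  intro hgen
  let T' := insert (Formula.atom p) (schemaV A ∪ schemaK A ∪ schemaKK A)
  have hKp : Entails T' (.atom p) → Entails T' (.K (.atom p)) :=
    hgen ∅ T' (Set.subset_insert _ _) _ (Or.inr ⟨.atom p, rfl⟩)
  have hT' : (actualWorld A).SatTheory T' := by
    rintro χ (rfl | hχ)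
    · trivial
    · exact actualWorld_satTheory A χ hχ
  exact hKp (fun M hM => hM _ (Set.mem_insert _ _)) (actualWorld A) hT'
end

section
/- Neither the theory V ∪ KK nor the theory K ∪ KK is generic. -/
theorem not_generic_of_model {A : Type} {T : Set (Formula A)} (hKK : schemaKK A ⊆ T) (p : A)
    (M : Model A) (hM : M.SatTheory T) (hp : M.atomVal p) (hKp : ¬ M.kVal (.atom p)) :
    ¬ Generic T := by
  intro hG
  have h := hG ∅ (insert (.atom p) T) (Set.subset_insert _ _) _ (hKK ⟨.atom p, rfl⟩)
  have hent : Entails (insert (.atom p) T) (.K (.atom p)) :=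
    h fun N hN => hN _ (Set.mem_insert _ _)
  refine hKp (hent M ?_)
  rintro φ (rfl | hφ)
  · exact hp
  · exact hM φ hφ

theorem not_valid_atom {A : Type} (p : A) : ¬ Valid (Formula.atom p) := fun h =>
  h ⟨fun _ => False, fun _ => False⟩ fun _ hφ => hφ.elim

/-- neither V ∪ KK nor K ∪ KK is generic. -/
theorem statement16 (A : Type) [Nonempty A] :
    ¬ Generic (schemaV A ∪ schemaKK A) ∧ ¬ Generic (schemaK A ∪ schemaKK A) := by
  obtain ⟨p⟩ := ‹Nonempty A›
  constructor
  · refine not_generic_of_model Set.subset_union_right p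
      ⟨fun _ => True, fun φ => φ ≠ .atom p⟩ ?_ trivial (fun h => h rfl)
    rintro χ (⟨φ, hφ, rfl⟩ | ⟨φ, rfl⟩)
    · rintro rfl
      exact not_valid_atom p hφ
    · intro _ h
      cases h
  · refine not_generic_of_model Set.subset_union_right p
      ⟨fun _ => True, fun _ => False⟩ ?_ trivial id
    rintro χ (⟨φ, ψ, rfl⟩ | ⟨φ, rfl⟩)
    · exact fun h => h.elim
    · exact fun h => h.elim
end

section
/- The theory K ∪ KK is not closed generic. -/
/-- A nonstandard valuation: implication is material, `Kφ` is always true, and atoms, negations,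
conjunctions and disjunctions are always false. -/
def ImpTruth {A : Type} : Formula A → Prop
  | .imp φ ψ => ImpTruth φ → ImpTruth ψ
  | .K _ => True
  | _ => False

/-- The model in which `Kφ` holds iff `φ` is true under `ImpTruth`; the atoms play no role and are
all false. -/
def impModel (A : Type) : Model A where
  atomVal _ := False
  kVal := ImpTruth

/-- The formulas that are both true under `ImpTruth` and satisfied by `impModel`. -/
def impTheory (A : Type) : Set (Formula A) :=
  { χ | ImpTruth χ ∧ (impModel A).Sat χ }

theorem impTheory_closed (A : Type) : TheoryClosed (impTheory A) :=
  fun _ h => ⟨trivial, h.1⟩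

theorem schemas_subset_impTheory (A : Type) : schemaK A ∪ schemaKK A ⊆ impTheory A := by
  rintro χ (⟨φ, ψ, rfl⟩ | ⟨φ, rfl⟩)
  · exact ⟨fun _ _ => trivial, fun h₁ h₂ => h₁ h₂⟩
  · exact ⟨fun _ => trivial, fun _ => trivial⟩

/-- the theory K ∪ KK is not closed generic. -/
theorem statement18 (A : Type) [Nonempty A] :
    ¬ ClosedGeneric (schemaK A ∪ schemaKK A) := by
  intro h
  obtain ⟨p⟩ := ‹Nonempty A›
  let φ : Formula A := .or (.atom p) (.neg (.atom p))
  have hφ : Entails (impTheory A) φ := fun M _ => Classical.em (M.atomVal p)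
  have hKK := h ∅ (impTheory A) (impTheory_closed A) (schemas_subset_impTheory A)
    (.imp (.K φ) (.K (.K φ))) (Or.inr ⟨φ, rfl⟩)
  have hK : Entails (impTheory A) (.K φ) := hKK hφ
  -- In `impModel`, `Kφ` means `ImpTruth φ`, which is `False` for a disjunction.
  exact hK (impModel A) fun _ hχ => hχ.2
end

section
/- No theory that includes the schema T (all formulas Kφ→φ) is closed generic; in particular, the schema T itself is not closed generic. -/
/-- no theory including the schema T is closed generic;
in particular, the schema T itself is not closed generic. -/
theorem statement19 (A : Type) [Nonempty A] :
    (∀ T : Set (Formula A), schemaT A ⊆ T → ¬ ClosedGeneric T) ∧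
    ¬ ClosedGeneric (schemaT A) := by
  have main : ∀ T : Set (Formula A), schemaT A ⊆ T → ¬ ClosedGeneric T := by
    intro T hT hgen
    obtain ⟨p⟩ := ‹Nonempty A›
    -- The set of all formulas is a closed (inconsistent) theory, so `K p` holds in its canonical
    -- model, while `p` fails there because no atom is declared true.
    have hp := hgen ∅ Set.univ (fun _ _ => Set.mem_univ _) (Set.subset_univ T)
      _ (hT ⟨Formula.atom p, rfl⟩)
    have hK : Entails Set.univ (Formula.atom p) := fun M hM => hM _ (Set.mem_univ _)
    exact hp hK
  exact ⟨main, main _ subset_rfl⟩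
end
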